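/- There exist ε > 0 and C > 0 such that for every Δt ∈ (0, ε) and every i ∈ {1,…,k}, the quantities B_i(Δt) := (1−ρ_iΔt)β_i(Δt)(2(1−λ(Δt)β_Σ(Δt)) − β_i(Δt)(A_i(Δt)+γ_iΔt)) and D_i(Δt) := (1−ρ_iΔt)B_i(Δt)σ_S²/(2ρ_i) satisfy |B_i(Δt) − ((2/(k^{1/2}(1+k)))(σ_K/σ_S) + (1/(2k^{3/4}(1+k)^{3/2}))·[(2+6k)(1/k)Σ_{j=1}^k γ_j^{1/2} − 5(1+k)γ_i^{1/2}]·(σ_K/σ_S)^{3/2}·√Δt)| ≤ C·Δt and |D_i(Δt) − ((1/(k^{1/2}(1+k)))·σ_Sσ_K/ρ_i + (1/(4k^{3/4}(1+k)^{3/2}))·[(2+6k)(1/k)Σ_{j=1}^k γ_j^{1/2} − 5(1+k)γ_i^{1/2}]·σ_S^{1/2}σ_K^{3/2}·√Δt/ρ_i)| ≤ C·Δt. -/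

import Mathlib

open Filter Topology Asymptotics

/-- `f = a + O(δ)` as `δ → 0+`. -/
def EZ (f : ℝ → ℝ) (a : ℝ) : Prop := (fun δ => f δ - a) =O[𝓝[>] (0:ℝ)] (fun δ : ℝ => δ)

/-- `f = a + b δ + O(δ²)` as `δ → 0+`. -/
def EX (f : ℝ → ℝ) (a b : ℝ) : Prop := EZ f a ∧ EZ (fun δ => (f δ - a) / δ) b

lemma pos_ev : ∀ᶠ δ in 𝓝[>] (0:ℝ), 0 < δ := eventually_mem_nhdsWithin

lemma tendsto_id0 : Tendsto (fun δ : ℝ => δ) (𝓝[>] (0:ℝ)) (𝓝 0) :=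
  tendsto_id.mono_left nhdsWithin_le_nhds

lemma EZ.tendsto {f : ℝ → ℝ} {a : ℝ} (h : EZ f a) : Tendsto f (𝓝[>] (0:ℝ)) (𝓝 a) := by
  have h1 : Tendsto (fun δ => f δ - a) (𝓝[>] (0:ℝ)) (𝓝 0) := IsBigO.trans_tendsto h tendsto_id0
  simpa using h1.add_const a

lemma EZ.congr {f g : ℝ → ℝ} {a : ℝ} (h : EZ f a) (e : ∀ᶠ δ in 𝓝[>] (0:ℝ), f δ = g δ) :
    EZ g a := by
  refine IsBigO.congr' h ?_ EventuallyEq.rfl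
  filter_upwards [e] with δ hδ
  rw [hδ]

lemma EZ.of_eq {f : ℝ → ℝ} {a b : ℝ} (h : EZ f a) (e : a = b) : EZ f b := e ▸ h

lemma EZ.const (a : ℝ) : EZ (fun _ => a) a := by
  unfold EZ; simpa using isBigO_zero _ _

lemma EZ.id : EZ (fun δ => δ) 0 := by
  unfold EZ; simpa using isBigO_refl _ _

lemma EZ.add {f g : ℝ → ℝ} {a b : ℝ} (hf : EZ f a) (hg : EZ g b) :
    EZ (fun δ => f δ + g δ) (a + b) := by
  refine (IsBigO.add hf hg).congr_left ?_
  intro δ; ring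

lemma EZ.comp {f g : ℝ → ℝ} {a g' : ℝ} (hf : EZ f a) (hg : HasDerivAt g g' a) :
    EZ (fun δ => g (f δ)) (g a) :=
  (hg.isBigO_sub.comp_tendsto hf.tendsto).trans hf

lemma EZ.mul {f g : ℝ → ℝ} {a b : ℝ} (hf : EZ f a) (hg : EZ g b) :
    EZ (fun δ => f δ * g δ) (a * b) := by
  have h1 : (fun δ => (f δ - a) * g δ) =O[𝓝[>] (0:ℝ)] (fun δ : ℝ => δ) := by
    simpa using IsBigO.mul hf (hg.tendsto.isBigO_one ℝ)
  have h2 : (fun δ => a * (g δ - b)) =O[𝓝[>] (0:ℝ)] (fun δ : ℝ => δ) := IsBigO.const_mul_left hg a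
  refine (h1.add h2).congr_left ?_
  intro δ; ring

lemma EZ.neg {f : ℝ → ℝ} {a : ℝ} (hf : EZ f a) : EZ (fun δ => - f δ) (-a) := by
  simpa using (EZ.const (-1)).mul hf

lemma EZ.sub {f g : ℝ → ℝ} {a b : ℝ} (hf : EZ f a) (hg : EZ g b) :
    EZ (fun δ => f δ - g δ) (a - b) := by
  simpa [sub_eq_add_neg] using hf.add hg.neg

lemma EZ.inv {f : ℝ → ℝ} {a : ℝ} (hf : EZ f a) (ha : a ≠ 0) : EZ (fun δ => (f δ)⁻¹) a⁻¹ :=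
  hf.comp (hasDerivAt_inv ha)

lemma EZ.div {f g : ℝ → ℝ} {a b : ℝ} (hf : EZ f a) (hg : EZ g b) (hb : b ≠ 0) :
    EZ (fun δ => f δ / g δ) (a / b) := by
  simpa [div_eq_mul_inv] using hf.mul (hg.inv hb)

lemma EZ.sqrt {f : ℝ → ℝ} {a : ℝ} (hf : EZ f a) (ha : a ≠ 0) :
    EZ (fun δ => √(f δ)) (√a) := hf.comp (Real.hasDerivAt_sqrt ha)

lemma EZ.sum {k : ℕ} {f : Fin k → ℝ → ℝ} {a : Fin k → ℝ} (h : ∀ i, EZ (f i) (a i)) :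
    EZ (fun δ => ∑ i, f i δ) (∑ i, a i) := by
  have : (fun δ => ∑ i, (f i δ - a i)) =O[𝓝[>] (0:ℝ)] (fun δ : ℝ => δ) :=
    IsBigO.fun_sum (fun i _ => h i)
  refine this.congr_left ?_
  intro δ; simp

lemma EX.congr {f g : ℝ → ℝ} {a b : ℝ} (h : EX f a b) (e : ∀ᶠ δ in 𝓝[>] (0:ℝ), f δ = g δ) :
    EX g a b :=
  ⟨h.1.congr e, h.2.congr (e.mono fun δ hδ => by rw [hδ])⟩

lemma EX.of_eq {f : ℝ → ℝ} {a b a' b' : ℝ} (h : EX f a b) (e : a = a') (e' : b = b') :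
    EX f a' b' := e ▸ e' ▸ h

lemma EX.const (a : ℝ) : EX (fun _ => a) a 0 :=
  ⟨EZ.const a, by simpa using EZ.const 0⟩

lemma EX.id : EX (fun δ => δ) 0 1 :=
  ⟨EZ.id, (EZ.const 1).congr (pos_ev.mono fun δ hδ => by field_simp; simp)⟩

lemma EX.add {f g : ℝ → ℝ} {a b a' b' : ℝ} (hf : EX f a a') (hg : EX g b b') :
    EX (fun δ => f δ + g δ) (a + b) (a' + b') :=
  ⟨hf.1.add hg.1, (hf.2.add hg.2).congr (Eventually.of_forall fun δ => by ring)⟩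

lemma EX.mul {f g : ℝ → ℝ} {a b a' b' : ℝ} (hf : EX f a a') (hg : EX g b b') :
    EX (fun δ => f δ * g δ) (a * b) (a' * b + a * b') :=
  ⟨hf.1.mul hg.1, ((hf.2.mul hg.1).add ((EZ.const a).mul hg.2)).congr
    (Eventually.of_forall fun δ => by ring)⟩

lemma EX.sub {f g : ℝ → ℝ} {a b a' b' : ℝ} (hf : EX f a a') (hg : EX g b b') :
    EX (fun δ => f δ - g δ) (a - b) (a' - b') :=
  ⟨hf.1.sub hg.1, (hf.2.sub hg.2).congr (Eventually.of_forall fun δ => by ring)⟩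

lemma EX.inv {f : ℝ → ℝ} {a a' : ℝ} (hf : EX f a a') (ha : a ≠ 0) :
    EX (fun δ => (f δ)⁻¹) a⁻¹ (-(a' * (a⁻¹ * a⁻¹))) := by
  refine ⟨hf.1.inv ha, ((hf.2.mul ((hf.1.inv ha).mul (EZ.const a⁻¹))).neg).congr ?_⟩
  filter_upwards [hf.1.tendsto.eventually_ne ha, pos_ev] with δ h1 h2
  field_simp
  ring

lemma EX.div {f g : ℝ → ℝ} {a b a' b' : ℝ} (hf : EX f a a') (hg : EX g b b') (hb : b ≠ 0) :
    EX (fun δ => f δ / g δ) (a / b) (a' / b - a * b' / b ^ 2) := by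
  refine ((hf.mul (hg.inv hb)).congr (Eventually.of_forall fun δ => ?_)).of_eq ?_ ?_
  · rw [div_eq_mul_inv]
  · rw [div_eq_mul_inv]
  · field_simp; ring

lemma EX.sqrt {f : ℝ → ℝ} {a a' : ℝ} (hf : EX f a a') (ha : 0 < a) :
    EX (fun δ => √(f δ)) (√a) (a' / (2 * √a)) := by
  have h0 : 0 < √a := Real.sqrt_pos.2 ha
  refine ⟨hf.1.sqrt ha.ne', ((hf.2.div ((hf.1.sqrt ha.ne').add (EZ.const (√a)))
    (by positivity)).congr ?_).of_eq (by ring)⟩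
  filter_upwards [hf.1.tendsto.eventually (lt_mem_nhds ha), pos_ev] with δ h1 h2
  have h3 : 0 < √(f δ) := Real.sqrt_pos.2 h1
  have h4 := Real.sq_sqrt h1.le
  have h5 := Real.sq_sqrt ha.le
  field_simp
  nlinarith

lemma EX.sum {k : ℕ} {f : Fin k → ℝ → ℝ} {a b : Fin k → ℝ} (h : ∀ i, EX (f i) (a i) (b i)) :
    EX (fun δ => ∑ i, f i δ) (∑ i, a i) (∑ i, b i) :=
  ⟨EZ.sum fun i => (h i).1, (EZ.sum fun i => (h i).2).congr
    (Eventually.of_forall fun δ => by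
      rw [← Finset.sum_div, Finset.sum_sub_distrib])⟩

lemma EX.bound {f : ℝ → ℝ} {a b : ℝ} (h : EX f a b) :
    ∃ C, ∀ᶠ δ in 𝓝[>] (0:ℝ), |f δ - (a + b * δ)| ≤ C * δ ^ 2 := by
  obtain ⟨C, hC⟩ := IsBigO.bound h.2
  refine ⟨C, ?_⟩
  filter_upwards [hC, pos_ev] with δ h1 h2
  rw [Real.norm_eq_abs, Real.norm_eq_abs, abs_of_pos h2] at h1
  have : f δ - (a + b * δ) = ((f δ - a) / δ - b) * δ := by field_simp; ring
  rw [this, abs_mul, abs_of_pos h2]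
  nlinarith

/-- The root of the quadratic. -/
noncomputable def XR (p h : ℝ) : ℝ := 2 / ((1 + p + h) + √((1 + p + h) ^ 2 - 4 * p))

lemma XR_spec {p h : ℝ} (hp : 0 < p) (hh : 0 < h) (hp1 : p ≤ 1) :
    0 < XR p h ∧ XR p h < 1 ∧ (1 - XR p h) * (1 - p * XR p h) = h * XR p h := by
  have hd : 0 ≤ (1 + p + h) ^ 2 - 4 * p := by nlinarith [sq_nonneg (1 - p), mul_pos hp hh]
  have h1 := Real.sq_sqrt hd
  have h0 := Real.sqrt_nonneg ((1 + p + h) ^ 2 - 4 * p)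
  have h2 : 1 - p + h < √((1 + p + h) ^ 2 - 4 * p) := by
    apply Real.lt_sqrt_of_sq_lt
    nlinarith [mul_pos hp hh]
  unfold XR
  set d := √((1 + p + h) ^ 2 - 4 * p) with hd
  have h3 : 0 < 1 + p + h + d := by positivity
  refine ⟨by positivity, ?_, ?_⟩
  · rw [div_lt_one h3]; linarith
  · field_simp
    nlinarith

lemma XR_cont : Continuous (fun q : ℝ × ℝ => 1 + q.1 + q.2 + √((1 + q.1 + q.2) ^ 2 - 4 * q.1)) := by
  fun_prop

lemma XR_tendsto (ρ c : ℝ) : Tendsto (fun δ : ℝ => XR (1 - ρ * δ ^ 2) (c * δ ^ 2)) (𝓝 0) (𝓝 1) := by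
  have : ContinuousAt (fun δ : ℝ => XR (1 - ρ * δ ^ 2) (c * δ ^ 2)) 0 := by
    unfold XR
    refine ContinuousAt.div (by fun_prop) (by fun_prop) ?_
    norm_num
  have h := this.tendsto
  have e : XR (1 - ρ * 0 ^ 2) (c * 0 ^ 2) = 1 := by norm_num [XR]
  rwa [e] at h

/-- Existence. -/
lemma exists_sol (k : ℕ) (hk : 1 ≤ k) (s : ℝ) (hs : 0 < s) (γ ρ : Fin k → ℝ)
    (hγ : ∀ i, 0 < γ i) (hρ : ∀ i, 0 < ρ i) :
    ∀ᶠ δ in 𝓝[>] (0:ℝ), ∃ q : ℝ × (Fin k → ℝ), √k / 2 ≤ q.1 ∧ q.1 ≤ √k ∧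
      (∀ i, 0 < q.2 i ∧ q.2 i < 1 ∧ (1 - q.2 i) * (1 - (1 - ρ i * δ ^ 2) * q.2 i)
        = γ i * s * δ ^ 2 * (q.1 + 1 / q.1) * q.2 i) ∧ ∑ i, q.2 i = q.1 ^ 2 := by
  have hk0 : (0:ℝ) < k := by exact_mod_cast hk
  have hk' : 0 < √(k:ℝ) := Real.sqrt_pos.2 hk0
  have hsq := Real.sq_sqrt hk0.le
  have hp : ∀ᶠ δ in 𝓝[>] (0:ℝ), ∀ i, 0 < 1 - ρ i * δ ^ 2 := by
    rw [eventually_all]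
    intro i
    have : Tendsto (fun δ : ℝ => 1 - ρ i * δ ^ 2) (𝓝[>] (0:ℝ)) (𝓝 (1 - ρ i * 0 ^ 2)) :=
      (Continuous.tendsto (by fun_prop) 0).mono_left nhdsWithin_le_nhds
    exact this.eventually (lt_mem_nhds (by norm_num))
  have hl : ∀ᶠ δ in 𝓝[>] (0:ℝ), (√(k:ℝ) / 2) ^ 2 <
      ∑ i, XR (1 - ρ i * δ ^ 2) ((γ i * s * (√k / 2 + 1 / (√k / 2))) * δ ^ 2) := by
    have : Tendsto (fun δ : ℝ => ∑ i, XR (1 - ρ i * δ ^ 2)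
        ((γ i * s * (√k / 2 + 1 / (√k / 2))) * δ ^ 2)) (𝓝[>] (0:ℝ)) (𝓝 (∑ i : Fin k, 1)) :=
      tendsto_finsetSum _ fun i _ => (XR_tendsto _ _).mono_left nhdsWithin_le_nhds
    refine this.eventually (lt_mem_nhds ?_)
    simp
    nlinarith
  filter_upwards [hp, hl, pos_ev] with δ h1 h2 h3
  have spec : ∀ u : ℝ, 0 < u → ∀ i, _ := fun u hu i =>
    XR_spec (h1 i) (h := (γ i * s * (u + 1 / u)) * δ ^ 2)
      (by have := hγ i; positivity) (by have := hρ i; nlinarith [mul_pos this (pow_pos h3 2)])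
  have hcont : ContinuousOn (fun u : ℝ => ∑ i, XR (1 - ρ i * δ ^ 2)
      ((γ i * s * (u + 1 / u)) * δ ^ 2) - u ^ 2) (Set.Icc (√k / 2) (√k)) := by
    have hu : ∀ u ∈ Set.Icc (√(k:ℝ) / 2) (√k), 0 < u := fun u hu => by
      have := hu.1; linarith
    refine ContinuousOn.sub (continuousOn_finsetSum _ fun i _ => ?_) (by fun_prop)
    unfold XR
    have hc : ContinuousOn (fun u : ℝ => (γ i * s * (u + 1 / u)) * δ ^ 2)
        (Set.Icc (√k / 2) (√k)) := by
      refine ContinuousOn.mul (ContinuousOn.mul continuousOn_const (continuousOn_id.add ?_))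
        continuousOn_const
      exact continuousOn_const.div continuousOn_id fun u h => (hu u h).ne'
    refine ContinuousOn.div continuousOn_const ?_ ?_
    · exact XR_cont.comp_continuousOn (continuousOn_const.prodMk hc)
    · intro u h
      have := hu u h
      have := hγ i
      have := h1 i
      positivity
  have hle : √(k:ℝ) / 2 ≤ √k := by linarith
  have hmem : (0:ℝ) ∈ Set.Icc ((fun u : ℝ => ∑ i, XR (1 - ρ i * δ ^ 2)
      ((γ i * s * (u + 1 / u)) * δ ^ 2) - u ^ 2) (√k)) ((fun u : ℝ => ∑ i, XR (1 - ρ i * δ ^ 2)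
      ((γ i * s * (u + 1 / u)) * δ ^ 2) - u ^ 2) (√k / 2)) := by
    constructor
    · simp only []
      have : ∑ i, XR (1 - ρ i * δ ^ 2) ((γ i * s * (√k + 1 / √k)) * δ ^ 2) ≤ ∑ i : Fin k, 1 :=
        Finset.sum_le_sum fun i _ => (spec _ hk' i).2.1.le
      simp only [Finset.sum_const, Finset.card_univ, Fintype.card_fin, nsmul_eq_mul, mul_one] at this
      linarith
    · simp only []; linarith
  obtain ⟨u, hu, hu0⟩ := intermediate_value_Icc' hle hcont hmem
  have hup : 0 < u := by have := hu.1; linarith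
  refine ⟨(u, fun i => XR (1 - ρ i * δ ^ 2) ((γ i * s * (u + 1 / u)) * δ ^ 2)), hu.1, hu.2, ?_, ?_⟩
  · intro i
    obtain ⟨a, b, c⟩ := spec u hup i
    exact ⟨a, b, by rw [c]; ring⟩
  · simp only [] at hu0 ⊢
    linarith

/-- Monotonicity used for uniqueness: normalized by `y = β / βSum`. -/
lemma mono_aux {p g u u' y y' : ℝ} (hp : 0 ≤ p) (hp1 : p ≤ 1) (hg : 0 < g) (hu : 0 < u)
    (huu : u < u') (hy : 0 < y) (h1' : u' ^ 2 * y' ≤ 1)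
    (e : (1 - u ^ 2 * y) * (1 - p * (u ^ 2 * y)) = g * (u * (u ^ 2 + 1)) * y)
    (e' : (1 - u' ^ 2 * y') * (1 - p * (u' ^ 2 * y')) = g * (u' * (u' ^ 2 + 1)) * y') :
    y' < y := by
  by_contra hc
  push Not at hc
  have hu' : 0 < u' := hu.trans huu
  have a1 : u ^ 2 * y ≤ u' ^ 2 * y' := by gcongr
  have a2 : g * (u * (u ^ 2 + 1)) * y < g * (u' * (u' ^ 2 + 1)) * y' := by
    have : u * (u ^ 2 + 1) < u' * (u' ^ 2 + 1) := by gcongr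
    have h3 : g * (u * (u ^ 2 + 1)) < g * (u' * (u' ^ 2 + 1)) := by gcongr
    calc _ < g * (u' * (u' ^ 2 + 1)) * y := by gcongr
      _ ≤ _ := by gcongr
  rw [← e, ← e'] at a2
  have a3 : p * (u ^ 2 * y) ≤ p * (u' ^ 2 * y') := by gcongr
  have a4 : p * (u' ^ 2 * y') ≤ 1 := by nlinarith
  have : (1 - u' ^ 2 * y') * (1 - p * (u' ^ 2 * y')) ≤ (1 - u ^ 2 * y) * (1 - p * (u ^ 2 * y)) := by
    apply mul_le_mul <;> linarith
  linarith

/-- uniqueness of the root at fixed `u`. -/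
lemma uniq_aux {p g x x' : ℝ} (hp : 0 ≤ p) (hp1 : p ≤ 1) (hg : 0 < g)
    (h1 : x ≤ 1) (h1' : x' ≤ 1)
    (e : (1 - x) * (1 - p * x) = g * x) (e' : (1 - x') * (1 - p * x') = g * x') : x = x' := by
  have : ∀ a b : ℝ, b ≤ 1 → (1 - a) * (1 - p * a) = g * a →
      (1 - b) * (1 - p * b) = g * b → ¬ a < b := by
    intro a b hb ea eb hab
    have h3 : p * a ≤ p * b := by gcongr
    have h4 : p * b ≤ 1 := by nlinarith
    have h5 : (1 - b) * (1 - p * b) ≤ (1 - a) * (1 - p * a) := by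
      apply mul_le_mul <;> linarith
    nlinarith
  exact le_antisymm (not_lt.1 (this _ _ h1 e' e)) (not_lt.1 (this _ _ h1' e e'))

/-- Expansion of the solution and of `B`. -/
lemma asym (k : ℕ) (hk : 1 ≤ k) (s : ℝ) (hs : 0 < s) (γ ρ : Fin k → ℝ)
    (hγ : ∀ i, 0 < γ i) (hρ : ∀ i, 0 < ρ i) (q : ℝ → ℝ × (Fin k → ℝ)) (z : Fin k → ℝ)
    (hz : ∀ i, z i = √(γ i * s * (√k + 1 / √k)))
    (hq : ∀ᶠ δ in 𝓝[>] (0:ℝ), √k / 2 ≤ (q δ).1 ∧ (q δ).1 ≤ √k ∧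
      (∀ i, 0 < (q δ).2 i ∧ (q δ).2 i < 1 ∧
        (1 - (q δ).2 i) * (1 - (1 - ρ i * δ ^ 2) * (q δ).2 i)
        = γ i * s * δ ^ 2 * ((q δ).1 + 1 / (q δ).1) * (q δ).2 i) ∧ ∑ i, (q δ).2 i = (q δ).1 ^ 2)
    (i : Fin k) :
    EX (fun δ => (1 - ρ i * δ ^ 2) * (s * (q δ).2 i / (q δ).1) *
      (2 / (1 + (q δ).1 ^ 2) - s * (q δ).2 i / (q δ).1 *
        ((1 - ρ i * δ ^ 2) * (q δ).2 i ^ 2 * γ i * δ ^ 2 / (1 - (1 - ρ i * δ ^ 2) * (q δ).2 i ^ 2)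
          + γ i * δ ^ 2)))
      (2 * s / (√k * (1 + k)))
      (s / (2 * √k * (1 + k) ^ 2) * ((2 + 6 * k) * ((∑ j, z j) / k) - 5 * (1 + k) * z i)) := by
  have hk0 : (0:ℝ) < k := by exact_mod_cast hk
  have hk' : 0 < √(k:ℝ) := Real.sqrt_pos.2 hk0
  have hsq := Real.sq_sqrt hk0.le
  have hzp : ∀ j, 0 < z j := fun j => by
    have := hγ j
    rw [hz]; positivity
  have hx0 : ∀ j, EZ (fun δ => (q δ).2 j) 1 := by
    intro j
    refine IsBigO.of_bound (√(γ j * s * (√k + 1 / (√k / 2)))) ?_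
    filter_upwards [hq, pos_ev] with δ h hδ
    obtain ⟨h1, h2, h3, -⟩ := h
    obtain ⟨a, b, c⟩ := h3 j
    have hγj := hγ j
    have hρj := hρ j
    rw [Real.norm_eq_abs, Real.norm_eq_abs, abs_of_pos hδ, abs_sub_comm, abs_of_pos (by linarith)]
    have hup : 0 < (q δ).1 := by linarith
    have e1 : (q δ).1 + 1 / (q δ).1 ≤ √k + 1 / (√k / 2) := by gcongr
    have e2 : (1 - (q δ).2 j) ^ 2 ≤ γ j * s * (√k + 1 / (√k / 2)) * δ ^ 2 := by
      calc (1 - (q δ).2 j) ^ 2 ≤ (1 - (q δ).2 j) * (1 - (1 - ρ j * δ ^ 2) * (q δ).2 j) := by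
            have : 0 ≤ (1 - (q δ).2 j) * (ρ j * δ ^ 2 * (q δ).2 j) :=
              mul_nonneg (by linarith) (by positivity)
            nlinarith
        _ = γ j * s * δ ^ 2 * ((q δ).1 + 1 / (q δ).1) * (q δ).2 j := c
        _ ≤ γ j * s * δ ^ 2 * (√k + 1 / (√k / 2)) * 1 := by gcongr
        _ = _ := by ring
    have e3 := Real.le_sqrt_of_sq_le e2
    rwa [Real.sqrt_mul (by positivity), Real.sqrt_sq hδ.le] at e3
  have husq : ∀ᶠ δ in 𝓝[>] (0:ℝ), √(∑ j, (q δ).2 j) = (q δ).1 := by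
    filter_upwards [hq] with δ h
    rw [h.2.2.2, Real.sqrt_sq (by linarith [h.1])]
  have hu0 : EZ (fun δ => (q δ).1) (√k) := by
    have : EZ (fun δ => ∑ j, (q δ).2 j) k := (EZ.sum hx0).of_eq (by simp)
    exact (this.sqrt hk0.ne').congr husq
  have hzz : ∀ j, EZ (fun δ => (1 - (q δ).2 j) / δ) (z j) := by
    intro j
    have hγj := hγ j
    have h1 : EZ (fun δ => γ j * s * ((q δ).1 + 1 / (q δ).1) * (q δ).2 j
        - ρ j * (q δ).2 j * (1 - (q δ).2 j)) (γ j * s * (√k + 1 / √k)) :=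
      ((((EZ.const (γ j * s)).mul (hu0.add ((EZ.const 1).div hu0 hk'.ne'))).mul (hx0 j)).sub
        (((EZ.const (ρ j)).mul (hx0 j)).mul ((EZ.const 1).sub (hx0 j)))).of_eq (by ring)
    rw [hz]
    refine (h1.sqrt (by positivity)).congr ?_
    filter_upwards [hq, pos_ev] with δ h hδ
    obtain ⟨a, b, c⟩ := h.2.2.1 j
    have e : γ j * s * ((q δ).1 + 1 / (q δ).1) * (q δ).2 j
        - ρ j * (q δ).2 j * (1 - (q δ).2 j) = ((1 - (q δ).2 j) / δ) ^ 2 := by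
      rw [div_pow, eq_div_iff (by positivity)]
      linarith
    rw [e, Real.sqrt_sq]
    exact div_nonneg (by linarith) hδ.le
  have hx : ∀ j, EX (fun δ => (q δ).2 j) 1 (-z j) := fun j =>
    ⟨hx0 j, ((hzz j).neg).congr (Eventually.of_forall fun δ => by ring)⟩
  have hu : EX (fun δ => (q δ).1) (√k) ((∑ j, -z j) / (2 * √k)) := by
    have : EX (fun δ => ∑ j, (q δ).2 j) k (∑ j, -z j) := (EX.sum hx).of_eq (by simp) rfl
    exact (this.sqrt hk0).congr husq
  have hd2 : EX (fun δ => δ ^ 2) 0 0 :=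
    ((EX.id.mul EX.id).congr (Eventually.of_forall fun δ => by ring)).of_eq (by ring) (by ring)
  have hp : EX (fun δ => 1 - ρ i * δ ^ 2) 1 0 :=
    ((EX.const 1).sub ((EX.const (ρ i)).mul hd2)).of_eq (by ring) (by ring)
  have hA2 : EZ (fun δ => (1 - ρ i * δ ^ 2) * ((q δ).2 i * (q δ).2 i) * γ i /
      ((1 - (q δ).2 i) / δ * (1 + (q δ).2 i) + ρ i * δ * ((q δ).2 i * (q δ).2 i)))
      (γ i / (2 * z i)) := by
    have hzi := hzp i
    refine (((hp.1.mul ((hx0 i).mul (hx0 i))).mul (EZ.const (γ i))).div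
      (((hzz i).mul ((EZ.const 1).add (hx0 i))).add
        (((EZ.const (ρ i)).mul EZ.id).mul ((hx0 i).mul (hx0 i)))) ?_).of_eq ?_
    · simp only [mul_zero, zero_mul, add_zero]
      positivity
    · simp only [mul_zero, zero_mul, add_zero]
      ring
  have hA : EX (fun δ => (1 - ρ i * δ ^ 2) * (q δ).2 i ^ 2 * γ i * δ ^ 2 /
      (1 - (1 - ρ i * δ ^ 2) * (q δ).2 i ^ 2)) 0 (γ i / (2 * z i)) := by
    have e : ∀ᶠ δ in 𝓝[>] (0:ℝ), (1 - ρ i * δ ^ 2) * ((q δ).2 i * (q δ).2 i) * γ i /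
        ((1 - (q δ).2 i) / δ * (1 + (q δ).2 i) + ρ i * δ * ((q δ).2 i * (q δ).2 i)) * δ =
        (1 - ρ i * δ ^ 2) * (q δ).2 i ^ 2 * γ i * δ ^ 2 /
        (1 - (1 - ρ i * δ ^ 2) * (q δ).2 i ^ 2) := by
      filter_upwards [pos_ev] with δ hδ
      have : 1 - (1 - ρ i * δ ^ 2) * (q δ).2 i ^ 2 = ((1 - (q δ).2 i) / δ * (1 + (q δ).2 i) +
        ρ i * δ * ((q δ).2 i * (q δ).2 i)) * δ := by
        field_simp; ring
      rw [this, ← mul_div_mul_right _ _ hδ.ne', div_mul_eq_mul_div]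
      congr 1
      ring
    refine ⟨((hA2.mul EZ.id).of_eq (by ring)).congr e, hA2.congr ?_⟩
    filter_upwards [e, pos_ev] with δ h hδ
    rw [← h]
    field_simp
    ring
  have hβ := ((EX.const s).mul (hx i)).div hu hk'.ne'
  have hu2 : EX (fun δ => 1 + (q δ).1 ^ 2) (1 + k) (-∑ j, z j) := by
    refine (((EX.const 1).add (hu.mul hu)).congr
      (Eventually.of_forall fun δ => by ring)).of_eq ?_ ?_
    · rw [← sq, hsq]
    · rw [Finset.sum_neg_distrib]; field_simp; ring
  have hB := (hp.mul hβ).mul (((EX.const 2).div hu2 (by positivity)).sub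
    (hβ.mul (hA.add ((EX.const (γ i)).mul hd2))))
  refine hB.of_eq ?_ ?_
  · field_simp; ring
  · have hzi := hzp i
    have hg : γ i = z i ^ 2 * √k / (s * (1 + k)) := by
      have hγi := hγ i
      rw [hz, Real.sq_sqrt (by positivity)]
      field_simp
      rw [hsq]; ring
    have hkk : (k:ℝ) = √k ^ 2 := hsq.symm
    rw [hg, Finset.sum_neg_distrib]
    generalize (∑ j, z j) = Z
    generalize √(k:ℝ) = r at *
    rw [hkk]
    field_simp
    ring

lemma norm_eq {s p Δt g b β : ℝ} (hs : 0 < s) (hb : 0 < b) (hp : p = 1 - g)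
    {c : ℝ} (e : 0 = (1 - g) * β ^ 2 * b ^ 2 - (2 - g + b * c * Δt) * s ^ 2 * β * b
      + s ^ 4 * (1 - β * c * Δt)) :
    (1 - (b / s) ^ 2 * (β / b)) * (1 - p * ((b / s) ^ 2 * (β / b)))
      = (c * Δt * s) * ((b / s) * ((b / s) ^ 2 + 1)) * (β / b) := by
  subst hp
  field_simp
  linear_combination -e

lemma uniq_sol (k : ℕ) (hk : 1 ≤ k) (s Δt : ℝ) (hs : 0 < s) (hΔ : 0 < Δt) (γ ρ : Fin k → ℝ)
    (hγ : ∀ i, 0 < γ i) (hρ : ∀ i, 0 < ρ i) (hp : ∀ i, 0 ≤ 1 - ρ i * Δt)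
    (b b' : ℝ) (β β' : Fin k → ℝ)
    (h1 : b = ∑ j, β j) (h1' : b' = ∑ j, β' j)
    (h2 : ∀ i, 0 = (1 - ρ i * Δt) * (β i) ^ 2 * b ^ 2
        - (2 - ρ i * Δt + b * γ i * Δt) * s ^ 2 * β i * b + s ^ 4 * (1 - β i * γ i * Δt))
    (h2' : ∀ i, 0 = (1 - ρ i * Δt) * (β' i) ^ 2 * b' ^ 2
        - (2 - ρ i * Δt + b' * γ i * Δt) * s ^ 2 * β' i * b' + s ^ 4 * (1 - β' i * γ i * Δt))
    (h3 : 0 < b) (h3' : 0 < b')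
    (h4 : ∀ i, 0 < β i * b ∧ β i * b ≤ s ^ 2) (h4' : ∀ i, 0 < β' i * b' ∧ β' i * b' ≤ s ^ 2) :
    b = b' ∧ β = β' := by
  have hp1 : ∀ i, 1 - ρ i * Δt ≤ 1 := fun i => by
    have := mul_pos (hρ i) hΔ; linarith
  have hsum : ∀ (b : ℝ) (β : Fin k → ℝ), b = ∑ j, β j → 0 < b → ∑ j, β j / b = 1 := by
    intro b β h h0
    rw [← Finset.sum_div, ← h, div_self h0.ne']
  have key : ∀ (b b' : ℝ) (β β' : Fin k → ℝ), b = ∑ j, β j → b' = ∑ j, β' j →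
    (∀ i, 0 = (1 - ρ i * Δt) * (β i) ^ 2 * b ^ 2
        - (2 - ρ i * Δt + b * γ i * Δt) * s ^ 2 * β i * b + s ^ 4 * (1 - β i * γ i * Δt)) →
    (∀ i, 0 = (1 - ρ i * Δt) * (β' i) ^ 2 * b' ^ 2
        - (2 - ρ i * Δt + b' * γ i * Δt) * s ^ 2 * β' i * b' + s ^ 4 * (1 - β' i * γ i * Δt)) →
    0 < b → 0 < b' → (∀ i, 0 < β i * b ∧ β i * b ≤ s ^ 2) →
    (∀ i, 0 < β' i * b' ∧ β' i * b' ≤ s ^ 2) → ¬ b < b' := by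
    intro b b' β β' h1 h1' h2 h2' h3 h3' h4 h4' hlt
    have hy : ∀ i, β' i / b' < β i / b := by
      intro i
      refine mono_aux (p := 1 - ρ i * Δt) (g := γ i * Δt * s) (u := b / s) (u' := b' / s)
        (hp i) (hp1 i) ?_ (by positivity) (by gcongr) ?_ ?_
        (norm_eq hs h3 rfl (h2 i)) (norm_eq hs h3' rfl (h2' i))
      · have := hγ i; positivity
      · exact div_pos (pos_of_mul_pos_left (h4 i).1 h3.le) h3
      · have : (b' / s) ^ 2 * (β' i / b') = β' i * b' / s ^ 2 := by field_simp
        rw [this, div_le_one (by positivity)]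
        exact (h4' i).2
    have : ∑ i, β' i / b' < ∑ i, β i / b :=
      Finset.sum_lt_sum_of_nonempty ⟨⟨0, hk⟩, Finset.mem_univ _⟩ fun i _ => hy i
    rw [hsum _ _ h1 h3, hsum _ _ h1' h3'] at this
    exact lt_irrefl _ this
  have hb : b = b' := le_antisymm
    (not_lt.1 (key _ _ _ _ h1' h1 h2' h2 h3' h3 h4' h4))
    (not_lt.1 (key _ _ _ _ h1 h1' h2 h2' h3 h3' h4 h4'))
  refine ⟨hb, ?_⟩
  subst hb
  funext i
  have hγi := hγ i
  have e : ∀ β : ℝ, 0 = (1 - ρ i * Δt) * β ^ 2 * b ^ 2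
        - (2 - ρ i * Δt + b * γ i * Δt) * s ^ 2 * β * b + s ^ 4 * (1 - β * γ i * Δt) →
      (1 - β * b / s ^ 2) * (1 - (1 - ρ i * Δt) * (β * b / s ^ 2)) =
      (γ i * Δt * (b + s ^ 2 / b)) * (β * b / s ^ 2) := by
    intro β h
    field_simp
    linear_combination -h
  have := uniq_aux (hp i) (hp1 i) (by positivity)
    ((div_le_one (by positivity)).2 (h4 i).2) ((div_le_one (by positivity)).2 (h4' i).2)
    (e _ (h2 i)) (e _ (h2' i))
  field_simp at this
  exact this

lemma fin_bound {k : ℕ} {f : Fin k → ℝ → ℝ} {a b : Fin k → ℝ} (h : ∀ i, EX (f i) (a i) (b i)) :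
    ∃ C, 0 < C ∧ ∀ᶠ δ in 𝓝[>] (0:ℝ), ∀ i, |f i δ - (a i + b i * δ)| ≤ C * δ ^ 2 := by
  choose C hC using fun i => (h i).bound
  refine ⟨1 + ∑ i, |C i|, by positivity, ?_⟩
  rw [eventually_all]
  intro i
  filter_upwards [hC i] with δ hδ
  refine hδ.trans ?_
  gcongr
  have := Finset.single_le_sum (f := fun i => |C i|) (fun i _ => abs_nonneg _) (Finset.mem_univ i)
  beta_reduce at this
  linarith [le_abs_self (C i)]

lemma rpow34 {x y : ℝ} (hx : 0 < x) (hy : 0 < y) (h : x = y ^ 4) : x ^ ((3:ℝ)/4) = y ^ 3 := by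
  rw [h, ← Real.rpow_natCast, ← Real.rpow_mul hy.le, ← Real.rpow_natCast]
  norm_num

lemma rpow32 {x y : ℝ} (hx : 0 < x) (hy : 0 < y) (h : x = y ^ 2) : x ^ ((3:ℝ)/2) = y ^ 3 := by
  rw [h, ← Real.rpow_natCast, ← Real.rpow_mul hy.le, ← Real.rpow_natCast]
  norm_num

lemma coef_eq (k : ℕ) (hk : 1 ≤ k) (s : ℝ) (hs : 0 < s) (γ : Fin k → ℝ)
    (hγ : ∀ i, 0 < γ i) (i : Fin k) :
    s / (2 * √k * (1 + k) ^ 2) * ((2 + 6 * k) * ((∑ j, √(γ j * s * (√k + 1 / √k))) / k)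
      - 5 * (1 + k) * √(γ i * s * (√k + 1 / √k)))
    = 1 / (2 * (k : ℝ) ^ ((3 : ℝ) / 4) * ((1 : ℝ) + k) ^ ((3 : ℝ) / 2))
                * ((2 + 6 * k) * ((∑ j, Real.sqrt (γ j)) / k)
                    - 5 * (1 + k) * Real.sqrt (γ i))
                * s ^ ((3 : ℝ) / 2) := by
  have hk0 : (0:ℝ) < k := by exact_mod_cast hk
  obtain ⟨κ, hκ, e1⟩ : ∃ κ : ℝ, 0 < κ ∧ (k:ℝ) = κ ^ 4 := by
    refine ⟨√√(k:ℝ), by positivity, ?_⟩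
    have h1 := Real.sq_sqrt hk0.le
    have h2 := Real.sq_sqrt (Real.sqrt_nonneg (k:ℝ))
    calc (k:ℝ) = (√√(k:ℝ) ^ 2) ^ 2 := by rw [h2, h1]
      _ = _ := by ring
  obtain ⟨m, hm, e2⟩ : ∃ m : ℝ, 0 < m ∧ (1 + k:ℝ) = m ^ 2 :=
    ⟨√(1 + k), by positivity, (Real.sq_sqrt (by positivity)).symm⟩
  obtain ⟨w, hw, e3⟩ : ∃ w : ℝ, 0 < w ∧ s = w ^ 2 :=
    ⟨√s, by positivity, (Real.sq_sqrt hs.le).symm⟩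
  rw [rpow34 hk0 hκ e1, rpow32 (by positivity) hm e2, rpow32 hs hw e3]
  have e4 : √(k:ℝ) = κ ^ 2 := by
    rw [e1, show κ ^ 4 = (κ ^ 2) ^ 2 by ring, Real.sqrt_sq (by positivity)]
  have e5 : ∀ j, √(γ j * s * (√k + 1 / √k)) = √(γ j) * (w * m / κ) := by
    intro j
    have : γ j * s * (√k + 1 / √k) = γ j * (w * m / κ) ^ 2 := by
      rw [e4, e3, div_pow, mul_pow, ← e2, e1]; field_simp; ring
    rw [this, Real.sqrt_mul (hγ j).le, Real.sqrt_sq (by positivity)]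
  simp only [e5]
  rw [← Finset.sum_mul, e4, e2, e3]
  field_simp

/-- for small `Δt > 0` and each `i`, the value-function coefficients
`B_i = (1−ρ_iΔt)β_i(2(1−λβ_Σ) − β_i(A_i+γ_iΔt))` and `D_i = (1−ρ_iΔt)B_iσ_S²/(2ρ_i)`
satisfy the stated first-order asymptotic expansions with error `O(Δt)`. -/
theorem stmt11 (k : ℕ) (hk : 1 ≤ k) (σS σK : ℝ) (hσS : 0 < σS) (hσK : 0 < σK)
    (γ ρ : Fin k → ℝ) (hγ : ∀ i, 0 < γ i) (hρ : ∀ i, 0 < ρ i) :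
    ∃ ε > 0, ∃ C > 0, ∀ Δt : ℝ, 0 < Δt → Δt < ε →
      ∃ (βSum lam : ℝ) (β φ A B D : Fin k → ℝ),
        (βSum = ∑ j, β j ∧
          (∀ i, 0 = (1 - ρ i * Δt) * (β i) ^ 2 * βSum ^ 2
              - (2 - ρ i * Δt + βSum * γ i * Δt) * (σK / σS) ^ 2 * β i * βSum
              + (σK / σS) ^ 4 * (1 - β i * γ i * Δt)) ∧
          0 < βSum ∧
          (∀ i, 0 < β i * βSum ∧ β i * βSum ≤ σK ^ 2 / σS ^ 2)) ∧
        (∀ q : ℝ × (Fin k → ℝ),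
          (q.1 = ∑ j, q.2 j ∧
            (∀ i, 0 = (1 - ρ i * Δt) * (q.2 i) ^ 2 * q.1 ^ 2
                - (2 - ρ i * Δt + q.1 * γ i * Δt) * (σK / σS) ^ 2 * q.2 i * q.1
                + (σK / σS) ^ 4 * (1 - q.2 i * γ i * Δt)) ∧
            0 < q.1 ∧
            (∀ i, 0 < q.2 i * q.1 ∧ q.2 i * q.1 ≤ σK ^ 2 / σS ^ 2)) →
          q.1 = βSum ∧ q.2 = β) ∧
        lam = βSum * σS ^ 2 / (σK ^ 2 + βSum ^ 2 * σS ^ 2) ∧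
        (∀ i, φ i = 1 - lam * β i / (1 - lam * βSum)) ∧
        (∀ i, A i = (1 - ρ i * Δt) * (1 - φ i) ^ 2 * γ i * Δt
            / (1 - (1 - ρ i * Δt) * (1 - φ i) ^ 2)) ∧
        (∀ i, B i = (1 - ρ i * Δt) * β i
            * (2 * (1 - lam * βSum) - β i * (A i + γ i * Δt))) ∧
        (∀ i, D i = (1 - ρ i * Δt) * B i * σS ^ 2 / (2 * ρ i)) ∧
        (∀ i, |B i -
            (2 / (Real.sqrt k * (1 + k)) * (σK / σS)
              + 1 / (2 * (k : ℝ) ^ ((3 : ℝ) / 4) * ((1 : ℝ) + k) ^ ((3 : ℝ) / 2))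
                * ((2 + 6 * k) * ((∑ j, Real.sqrt (γ j)) / k)
                    - 5 * (1 + k) * Real.sqrt (γ i))
                * (σK / σS) ^ ((3 : ℝ) / 2) * Real.sqrt Δt)| ≤ C * Δt) ∧
        (∀ i, |D i -
            (1 / (Real.sqrt k * (1 + k)) * (σS * σK / ρ i)
              + 1 / (4 * (k : ℝ) ^ ((3 : ℝ) / 4) * ((1 : ℝ) + k) ^ ((3 : ℝ) / 2))
                * ((2 + 6 * k) * ((∑ j, Real.sqrt (γ j)) / k)
                    - 5 * (1 + k) * Real.sqrt (γ i))
                * (Real.sqrt σS * σK ^ ((3 : ℝ) / 2)) * Real.sqrt Δt / ρ i)| ≤ C * Δt) := by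

  set s := σK / σS with hsdef
  have hs : 0 < s := by positivity
  clear_value s
  obtain ⟨q, hq⟩ := (exists_sol k hk s hs γ ρ hγ hρ).choice
  have hBX := fun i => (asym k hk s hs γ ρ hγ hρ q _ (fun _ => rfl) hq i).of_eq rfl
    (coef_eq k hk s hs γ hγ i)
  have hd2 : EX (fun δ => δ ^ 2) 0 0 :=
    ((EX.id.mul EX.id).congr (Eventually.of_forall fun δ => by ring)).of_eq (by ring) (by ring)
  have hp : ∀ i, EX (fun δ => 1 - ρ i * δ ^ 2) 1 0 := fun i =>
    ((EX.const 1).sub ((EX.const (ρ i)).mul hd2)).of_eq (by ring) (by ring)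
  have hDX := fun i => ((hp i).mul (hBX i)).mul (EX.const (σS ^ 2 / (2 * ρ i)))
  obtain ⟨C1, hC1, hB⟩ := fin_bound hBX
  obtain ⟨C2, hC2, hD⟩ := fin_bound hDX
  have hpos : ∀ᶠ δ in 𝓝[>] (0:ℝ), ∀ i, 0 < 1 - ρ i * δ ^ 2 := by
    rw [eventually_all]
    exact fun i => (hp i).1.tendsto.eventually (lt_mem_nhds one_pos)
  obtain ⟨ε, hε, hall⟩ := mem_nhdsGT_iff_exists_Ioo_subset.1 (hq.and (hB.and (hD.and hpos)))
  refine ⟨ε ^ 2, pow_pos hε 2, C1 + C2, by positivity, ?_⟩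
  intro Δt h0 hlt
  obtain ⟨δ, hδ, rfl⟩ : ∃ δ : ℝ, 0 < δ ∧ Δt = δ ^ 2 :=
    ⟨√Δt, by positivity, (Real.sq_sqrt h0.le).symm⟩
  have hδε : δ < ε := lt_of_pow_lt_pow_left₀ 2 (le_of_lt hε) hlt
  obtain ⟨⟨hu1, hu2, hx, hsum⟩, hB', hD', hpos'⟩ := hall ⟨hδ, hδε⟩
  clear hB hD hpos hq hBX hDX hall
  generalize q δ = Q at *
  obtain ⟨u, x⟩ := Q
  simp only [] at hu1 hu2 hx hsum hB' hD'
  have hk0 : (0:ℝ) < k := by exact_mod_cast hk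
  have hk' : 0 < √(k:ℝ) := Real.sqrt_pos.2 hk0
  have hu : 0 < u := by linarith
  have hσ : σK = s * σS := by rw [hsdef]; field_simp
  have hs2 : σK ^ 2 / σS ^ 2 = s ^ 2 := by rw [hσ]; field_simp
  have hsys : (s * u = ∑ j, s * x j / u) ∧
      (∀ i, 0 = (1 - ρ i * δ ^ 2) * (s * x i / u) ^ 2 * (s * u) ^ 2
              - (2 - ρ i * δ ^ 2 + (s * u) * γ i * δ ^ 2) * s ^ 2 * (s * x i / u) * (s * u)
              + s ^ 4 * (1 - (s * x i / u) * γ i * δ ^ 2)) ∧ 0 < s * u ∧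
      (∀ i, 0 < s * x i / u * (s * u) ∧ s * x i / u * (s * u) ≤ s ^ 2) := by
    refine ⟨?_, ?_, by positivity, ?_⟩
    · rw [← Finset.sum_div, ← Finset.mul_sum, hsum]; field_simp
    · intro i
      obtain ⟨-, -, c⟩ := hx i
      have c' : (1 - x i) * (1 - (1 - ρ i * δ ^ 2) * x i) * u
        = γ i * s * δ ^ 2 * (u ^ 2 + 1) * x i := by
        rw [c]; field_simp
      field_simp
      linear_combination -s ^ 4 * c'
    · intro i
      obtain ⟨a, b, -⟩ := hx i
      have : s * x i / u * (s * u) = s ^ 2 * x i := by field_simp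
      rw [this]
      exact ⟨by positivity, by nlinarith [pow_pos hs 2]⟩
  have hlam : ∀ i, s * u * σS ^ 2 / (σK ^ 2 + (s * u) ^ 2 * σS ^ 2) * (s * x i / u) /
      (1 - s * u * σS ^ 2 / (σK ^ 2 + (s * u) ^ 2 * σS ^ 2) * (s * u)) = x i := by
    intro i
    have : 1 - s * u * σS ^ 2 / (σK ^ 2 + (s * u) ^ 2 * σS ^ 2) * (s * u) = 1 / (1 + u ^ 2) := by
      rw [hσ]; field_simp; ring
    rw [this, hσ]
    field_simp
  have hlam1 : 1 - s * u * σS ^ 2 / (σK ^ 2 + (s * u) ^ 2 * σS ^ 2) * (s * u) = 1 / (1 + u ^ 2) := by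
    rw [hσ]; field_simp; ring
  refine ⟨s * u, s * u * σS ^ 2 / (σK ^ 2 + (s * u) ^ 2 * σS ^ 2), fun i => s * x i / u,
    fun i => 1 - x i, fun i => (1 - ρ i * δ ^ 2) * x i ^ 2 * γ i * δ ^ 2 /
        (1 - (1 - ρ i * δ ^ 2) * x i ^ 2),
    fun i => (1 - ρ i * δ ^ 2) * (s * x i / u) *
      (2 / (1 + u ^ 2) - s * x i / u * ((1 - ρ i * δ ^ 2) * x i ^ 2 * γ i * δ ^ 2 /
        (1 - (1 - ρ i * δ ^ 2) * x i ^ 2) + γ i * δ ^ 2)),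
    fun i => (1 - ρ i * δ ^ 2) * ((1 - ρ i * δ ^ 2) * (s * x i / u) *
      (2 / (1 + u ^ 2) - s * x i / u * ((1 - ρ i * δ ^ 2) * x i ^ 2 * γ i * δ ^ 2 /
        (1 - (1 - ρ i * δ ^ 2) * x i ^ 2) + γ i * δ ^ 2))) * σS ^ 2 / (2 * ρ i),
    ?_, ?_, rfl, ?_, ?_, ?_, ?_, ?_, ?_⟩
  · rw [hs2]; exact hsys
  · rintro ⟨b, β⟩ ⟨a1, a2, a3, a4⟩
    rw [hs2] at a4
    exact uniq_sol k hk s (δ ^ 2) hs h0 γ ρ hγ hρ (fun i => (hpos' i).le) b _ β _ a1 hsys.1 a2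
      hsys.2.1 a3 hsys.2.2.1 a4 hsys.2.2.2
  · intro i
    simp only []
    rw [hlam i]
  · intro i
    simp only [sub_sub_cancel]
  · intro i
    simp only []
    rw [hlam1]; ring
  · intro i; rfl
  · intro i
    have h := hB' i
    rw [Real.sqrt_sq hδ.le]
    refine le_trans (le_of_eq ?_) (h.trans ?_)
    · congr 2; ring
    · gcongr; linarith
  · intro i
    have h := hD' i
    have hρi := hρ i
    rw [Real.sqrt_sq hδ.le]
    refine le_trans (le_of_eq ?_) (h.trans ?_)
    · congr 1
      obtain ⟨a, ha, ea⟩ : ∃ a : ℝ, 0 < a ∧ σS = a ^ 2 :=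
        ⟨√σS, by positivity, (Real.sq_sqrt hσS.le).symm⟩
      obtain ⟨b, hb, eb⟩ : ∃ b : ℝ, 0 < b ∧ σK = b ^ 2 :=
        ⟨√σK, by positivity, (Real.sq_sqrt hσK.le).symm⟩
      have e1 : √σS * σK ^ ((3:ℝ)/2) = a * b ^ 3 := by
        rw [rpow32 hσK hb eb, ea, Real.sqrt_sq ha.le]
      have e2 : s ^ ((3:ℝ)/2) = (b / a) ^ 3 :=
        rpow32 hs (by positivity) (by rw [hsdef, ea, eb, div_pow])
      have e3 : s = b ^ 2 / a ^ 2 := by rw [hsdef, ea, eb]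
      rw [e1, e2]
      congr 1
      · ring
      · generalize ((2 + 6 * k : ℝ) * ((∑ j, Real.sqrt (γ j)) / k)
                    - 5 * (1 + k) * Real.sqrt (γ i)) = T
        have hk34 : 0 < (k:ℝ) ^ ((3:ℝ)/4) := by positivity
        have hk32 : 0 < (1 + k:ℝ) ^ ((3:ℝ)/2) := by positivity
        generalize (k:ℝ) ^ ((3:ℝ)/4) = k3 at *
        generalize (1 + k:ℝ) ^ ((3:ℝ)/2) = k4 at *
        rw [ea, eb, e3]
        field_simp
        ring
    · gcongr; linarith
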